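/- Let X be an integer-valued random variable with finite mean μ and finite variance σ² > 0. Then H(X) ≤ 1/2 + ln( Σ_{x ∈ ℤ} e^{−(x−μ)²/(2σ²)} ), and the inequality still holds when the sum is restricted to the integer values actually taken by X. -/

import Mathlib

open MeasureTheory Real

/-!
The proof is Gibbs' inequality. Let `g` be the Gaussian weight `e^{-(k-μ)²/(2σ²)}` restricted to
the support of `p`, and let `S` be its total mass, so that `g / S` is a probability mass function.
Applying `log t ≤ t - 1` to `t = g k / (S * p k)` gives, for every `k`,
`p k * log (1 / p k) ≤ p k * ((k-μ)²/(2σ²) + log S) + (g k / S - p k)`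
(`gibbs_pointwise`). The right-hand side is summable with sum `1/2 + log S`. Since the entropy
terms are nonnegative, the bound also shows that the entropy series converges, so its `tsum` is
the genuine entropy. This is the restricted inequality; the unrestricted one follows because
removing the restriction only increases the sum inside the logarithm.
-/

/-- The shifted Gaussian series over `ℤ` is, up to rescaling, the series defining the even
Hurwitz kernel of Mathlib, which supplies its convergence. -/
lemma summable_gaussian_int (μ σ2 : ℝ) (h : 0 < σ2) :
    Summable (fun k : ℤ => Real.exp (-((k : ℝ) - μ) ^ 2 / (2 * σ2))) := by
  have ht : 0 < 1 / (2 * π * σ2) := by positivity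
  refine (HurwitzZeta.hasSum_int_evenKernel (-μ) ht).summable.congr fun k => ?_
  congr 1
  have := Real.pi_ne_zero
  field_simp
  ring

/-- Gibbs' inequality at one point, with reference weight `e^{-q}` of total mass `S`. -/
lemma gibbs_pointwise {p q S : ℝ} (hp : 0 < p) (hS : 0 < S) :
    p * Real.log (1 / p) ≤ p * (q + Real.log S) + (Real.exp (-q) / S - p) := by
  have h := Real.log_le_sub_one_of_pos (show 0 < Real.exp (-q) / (S * p) by positivity)
  rw [Real.log_div (by positivity) (by positivity), Real.log_exp,
    Real.log_mul hS.ne' hp.ne'] at h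
  have h2 := mul_le_mul_of_nonneg_left h hp.le
  have h3 : p * (Real.exp (-q) / (S * p) - 1) = Real.exp (-q) / S - p := by
    field_simp
  rw [h3] at h2
  rw [one_div, Real.log_inv]
  linarith

/-- If `X` is integer-valued with finite mean `μ` and finite variance `σ² > 0`, then
`H(X) ≤ 1/2 + ln(Σ_{x∈ℤ} e^{-(x-μ)²/(2σ²)})`, and the inequality still holds when the
sum is restricted to the integer values actually taken by `X`. -/
theorem entropy_le_gaussian_sum
    (p : ℤ → ℝ) (hp0 : ∀ k, 0 ≤ p k) (hp1 : ∑' k, p k = 1)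
    (μ : ℝ) (hμ : μ = ∑' k : ℤ, (k : ℝ) * p k)
    (hμs : Summable (fun k : ℤ => (k : ℝ) * p k))
    (σ2 : ℝ) (hσ2 : σ2 = ∑' k : ℤ, ((k : ℝ) - μ) ^ 2 * p k)
    (hσ2s : Summable (fun k : ℤ => ((k : ℝ) - μ) ^ 2 * p k)) (hσ2pos : 0 < σ2) :
    (∑' k, p k * Real.log (1 / p k)) ≤
      1 / 2 + Real.log (∑' k : ℤ, Real.exp (-((k : ℝ) - μ) ^ 2 / (2 * σ2))) ∧
    (∑' k, p k * Real.log (1 / p k)) ≤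
      1 / 2 + Real.log (∑' k : ℤ, Set.indicator {j : ℤ | p j ≠ 0}
        (fun j => Real.exp (-((j : ℝ) - μ) ^ 2 / (2 * σ2))) k) := by
  have hps : Summable p := by
    by_contra hn
    rw [tsum_eq_zero_of_not_summable hn] at hp1
    exact zero_ne_one hp1
  have hple : ∀ k, p k ≤ 1 := fun k => hp1 ▸ hps.le_tsum k fun j _ => hp0 j
  have hG := summable_gaussian_int μ σ2 hσ2pos
  set G : ℤ → ℝ := fun j => Real.exp (-((j : ℝ) - μ) ^ 2 / (2 * σ2)) with hGdef
  have hGpos : ∀ k, 0 < G k := fun k => Real.exp_pos _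
  set g : ℤ → ℝ := Set.indicator {j : ℤ | p j ≠ 0} G with hgdef
  have hg : Summable g := hG.indicator _
  have hg0 : ∀ k, 0 ≤ g k := fun k => Set.indicator_nonneg (fun j _ => (hGpos j).le) k
  have hgG : ∀ k, g k ≤ G k := fun k => Set.indicator_le_self' (fun j _ => (hGpos j).le) k
  obtain ⟨k₀, hk₀⟩ : ∃ k, p k ≠ 0 := by
    by_contra! hn
    simp [hn] at hp1
  set S : ℝ := ∑' k, g k with hSdef
  have hS : 0 < S := by
    refine hg.tsum_pos hg0 k₀ ?_
    rw [hgdef, Set.indicator_of_mem (show k₀ ∈ {j : ℤ | p j ≠ 0} from hk₀)]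
    exact hGpos k₀
  have hpt : ∀ k, p k * Real.log (1 / p k) ≤
      (((k : ℝ) - μ) ^ 2 * p k) * (1 / (2 * σ2)) + p k * Real.log S + (g k / S - p k) := by
    intro k
    rcases (hp0 k).eq_or_lt with h | h
    · rw [← h]
      simpa using div_nonneg (hg0 k) hS.le
    · have h1 := gibbs_pointwise (q := ((k : ℝ) - μ) ^ 2 / (2 * σ2)) h hS
      have h2 : g k = Real.exp (-(((k : ℝ) - μ) ^ 2 / (2 * σ2))) := by
        rw [hgdef, Set.indicator_of_mem (show k ∈ {j : ℤ | p j ≠ 0} from h.ne'), ← neg_div]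
      rw [h2]
      refine h1.trans (le_of_eq ?_)
      ring
  have hbound : HasSum (fun k : ℤ => (((k : ℝ) - μ) ^ 2 * p k) * (1 / (2 * σ2)) +
      p k * Real.log S + (g k / S - p k))
      (σ2 * (1 / (2 * σ2)) + 1 * Real.log S + (S / S - 1)) := by
    have a : HasSum (fun k : ℤ => ((k : ℝ) - μ) ^ 2 * p k) σ2 := by
      have := hσ2s.hasSum
      rwa [← hσ2] at this
    have b : HasSum p 1 := hp1 ▸ hps.hasSum
    exact ((a.mul_right _).add (b.mul_right _)).add ((hg.hasSum.div_const S).sub b)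
  have hent0 : ∀ k, 0 ≤ p k * Real.log (1 / p k) := by
    intro k
    rw [one_div, Real.log_inv]
    exact mul_nonneg (hp0 k) (neg_nonneg.2 (Real.log_nonpos (hp0 k) (hple k)))
  have hents : Summable (fun k => p k * Real.log (1 / p k)) :=
    Summable.of_nonneg_of_le hent0 hpt hbound.summable
  have hmain : (∑' k, p k * Real.log (1 / p k)) ≤ 1 / 2 + Real.log S := by
    refine (hasSum_le hpt hents.hasSum hbound).trans (le_of_eq ?_)
    have := hσ2pos.ne'
    have := hS.ne'
    field_simp
    ring
  refine ⟨hmain.trans ?_, hmain⟩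
  have := Real.log_le_log hS (hg.tsum_le_tsum hgG hG)
  linarith
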